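/- For every c ∈ ℝ^K with all entries positive and every index k, the two-sided limit lim_{δ→0} (R(c + δ e_k) − R(c))/δ exists and equals −p_k(c) / (ν(c) · ln 2), where e_k is the k-th standard basis vector of ℝ^K. In particular, if p_k(c) = 0 this derivative is 0. -/

import Mathlib

open Classical in
/-- The unique positive solution ν(c) of the water-filling equation
Σ_k max(ν − σ² c_k, 0) = P_T. -/
noncomputable def waterLevel (K : ℕ) (σ2 PT : ℝ) (c : Fin K → ℝ) : ℝ :=
  if h : ∃ ν : ℝ, 0 < ν ∧ ∑ k : Fin K, max (ν - σ2 * c k) 0 = PT then h.choose else 0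

/-- The water-filling power allocation p_k(c) = max(ν(c)/c_k − σ², 0). -/
noncomputable def wfPower (K : ℕ) (σ2 PT : ℝ) (c : Fin K → ℝ) (k : Fin K) : ℝ :=
  max (waterLevel K σ2 PT c / c k - σ2) 0

/-- The resulting sum rate R(c) = Σ_k log₂(1 + p_k(c)/σ²). -/
noncomputable def sumRate (K : ℕ) (σ2 PT : ℝ) (c : Fin K → ℝ) : ℝ :=
  ∑ k : Fin K, Real.logb 2 (1 + wfPower K σ2 PT c k / σ2)

open Classical in
lemma wl_spec (K : ℕ) (hK : 1 ≤ K) (σ2 PT : ℝ) (hσ2 : 0 < σ2) (hPT : 0 < PT)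
    (c : Fin K → ℝ) (hc : ∀ k, 0 < c k) :
    0 < waterLevel K σ2 PT c ∧ ∑ k : Fin K, max (waterLevel K σ2 PT c - σ2 * c k) 0 = PT := by
  have h : ∃ ν : ℝ, 0 < ν ∧ ∑ k : Fin K, max (ν - σ2 * c k) 0 = PT := by
    let k : Fin K := ⟨0, hK⟩
    have hcont : Continuous (fun ν : ℝ => ∑ k : Fin K, max (ν - σ2 * c k) 0) := by fun_prop
    have h0 : ∑ k : Fin K, max ((0:ℝ) - σ2 * c k) 0 = 0 := by
      apply Finset.sum_eq_zero
      intro j _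
      apply max_eq_right
      have := mul_pos hσ2 (hc j)
      linarith
    have hb : (0:ℝ) ≤ σ2 * c k + PT := by have := mul_pos hσ2 (hc k); linarith
    have h1 : PT ≤ ∑ j : Fin K, max ((σ2 * c k + PT) - σ2 * c j) 0 := by
      have := Finset.single_le_sum (f := fun j => max ((σ2 * c k + PT) - σ2 * c j) 0)
        (fun j _ => le_max_right _ _) (Finset.mem_univ k)
      refine le_trans ?_ this
      refine le_trans ?_ (le_max_left _ _)
      linarith
    obtain ⟨ν, hν, he⟩ := intermediate_value_Icc hb hcont.continuousOn ⟨by rw [h0]; exact hPT.le, h1⟩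
    refine ⟨ν, lt_of_le_of_ne hν.1 ?_, he⟩
    rintro rfl
    simp only [h0] at he
    linarith
  unfold waterLevel
  rw [dif_pos h]
  exact h.choose_spec

lemma wl_le (K : ℕ) (σ2 PT : ℝ) (hσ2 : 0 < σ2) (hPT : 0 < PT)
    (c c' : Fin K → ℝ) (ν ν' e : ℝ) (h : ∑ k, max (ν - σ2 * c k) 0 = PT)
    (h' : ∑ k, max (ν' - σ2 * c' k) 0 = PT) (hcc : ∀ k, c' k ≤ c k + e) :
    ν' ≤ ν + σ2 * e := by
  by_contra! hlt
  have hex : ∃ j, 0 < max (ν - σ2 * c j) 0 := by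
    by_contra! hn
    have := Finset.sum_nonpos (fun j (_ : j ∈ Finset.univ) => hn j)
    linarith
  have key : ∀ j, ν - σ2 * c j < ν' - σ2 * c' j := by
    intro j
    have := mul_le_mul_of_nonneg_left (hcc j) hσ2.le
    linarith
  obtain ⟨j, hj⟩ := hex
  have : ∑ k, max (ν - σ2 * c k) 0 < ∑ k, max (ν' - σ2 * c' k) 0 := by
    apply Finset.sum_lt_sum
    · intro i _
      exact max_le_max (key i).le le_rfl
    · refine ⟨j, Finset.mem_univ _, ?_⟩
      have h1 : 0 < ν - σ2 * c j := by
        rcases lt_max_iff.1 hj with h | h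
        · exact h
        · exact absurd h (lt_irrefl _)
      rw [max_eq_left h1.le]
      exact lt_of_lt_of_le (key j) (le_max_left _ _)
  linarith

lemma term_le (σ2 ν x q : ℝ) (hσ2 : 0 < σ2) (hν : 0 < ν) (hx : 0 < x) (hq : 0 ≤ q) :
    Real.log (1 + q / σ2) ≤ Real.log (1 + max (ν / x - σ2) 0 / σ2)
      + x * (q - max (ν / x - σ2) 0) / ν := by
  set p := max (ν / x - σ2) 0 with hp
  have hp0 : 0 ≤ p := le_max_right _ _
  have hA : 0 < 1 + q / σ2 := by positivity
  have hB : 0 < 1 + p / σ2 := by positivity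
  have h1 := Real.log_le_sub_one_of_pos (div_pos hA hB)
  rw [Real.log_div hA.ne' hB.ne'] at h1
  have h2 : (1 + q / σ2) / (1 + p / σ2) - 1 = (q - p) / (σ2 + p) := by
    have : σ2 + p ≠ 0 := by positivity
    field_simp
    ring
  have h3 : (q - p) / (σ2 + p) ≤ x * (q - p) / ν := by
    rcases le_total (ν / x - σ2) 0 with h | h
    · have : p = 0 := by rw [hp]; exact max_eq_right h
      rw [this, sub_zero, add_zero]
      have : ν ≤ σ2 * x := by
        rw [← div_le_iff₀ hx]; linarith
      rw [div_le_div_iff₀ hσ2 hν]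
      nlinarith
    · have : σ2 + p = ν / x := by rw [hp, max_eq_left h]; ring
      rw [this]
      apply le_of_eq
      field_simp
  linarith

lemma cp_eq (σ2 ν x : ℝ) (hx : 0 < x) : x * max (ν / x - σ2) 0 = max (ν - σ2 * x) 0 := by
  rw [mul_max_of_nonneg _ _ hx.le, mul_zero]
  congr 1
  field_simp

lemma rate_le (K : ℕ) (σ2 PT : ℝ) (hσ2 : 0 < σ2)
    (c c' : Fin K → ℝ) (hc : ∀ j, 0 < c j) (hc' : ∀ j, 0 < c' j) (ν ν' : ℝ) (hν : 0 < ν)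
    (h : ∑ k, max (ν - σ2 * c k) 0 = PT)
    (h' : ∑ k, max (ν' - σ2 * c' k) 0 = PT) (k : Fin K) (hk : ∀ j, j ≠ k → c' j = c j) :
    ∑ j, Real.log (1 + max (ν' / c' j - σ2) 0 / σ2) ≤
      ∑ j, Real.log (1 + max (ν / c j - σ2) 0 / σ2)
        - (c' k - c k) * max (ν' / c' k - σ2) 0 / ν := by
  have h1 := Finset.sum_le_sum (fun j (_ : j ∈ Finset.univ) =>
    term_le σ2 ν (c j) (max (ν' / c' j - σ2) 0) hσ2 hν (hc j) (le_max_right _ _))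
  rw [Finset.sum_add_distrib] at h1
  have h2 : ∑ j, c j * (max (ν' / c' j - σ2) 0 - max (ν / c j - σ2) 0) / ν
      = - (c' k - c k) * max (ν' / c' k - σ2) 0 / ν := by
    rw [← Finset.sum_div]
    congr 1
    have e1 : ∀ j, c j * (max (ν' / c' j - σ2) 0 - max (ν / c j - σ2) 0)
        = max (ν' - σ2 * c' j) 0 - max (ν - σ2 * c j) 0
          + (c j - c' j) * max (ν' / c' j - σ2) 0 := by
      intro j
      rw [← cp_eq _ _ _ (hc j), ← cp_eq _ _ _ (hc' j)]; ring
    simp_rw [e1]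
    rw [Finset.sum_add_distrib, Finset.sum_sub_distrib, h, h',
      Finset.sum_eq_single k]
    · ring
    · intro j _ hj
      rw [hk j hj]; ring
    · simp
  rw [h2] at h1
  have : - (c' k - c k) * max (ν' / c' k - σ2) 0 / ν = -((c' k - c k) * max (ν' / c' k - σ2) 0 / ν) := by
    ring
  linarith

lemma squeeze_deriv (f F G : ℝ → ℝ) (L : ℝ) (hF : Filter.Tendsto F (nhds 0) (nhds L))
    (hG : Filter.Tendsto G (nhds 0) (nhds L))
    (h1 : ∀ᶠ t in nhds (0:ℝ), f t ≤ f 0 + t * F t)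
    (h2 : ∀ᶠ t in nhds (0:ℝ), f 0 + t * G t ≤ f t) : HasDerivAt f L 0 := by
  rw [hasDerivAt_iff_tendsto_slope]
  have hmin := (hF.min hG).mono_left (nhdsWithin_le_nhds (s := {(0:ℝ)}ᶜ))
  have hmax := (hF.max hG).mono_left (nhdsWithin_le_nhds (s := {(0:ℝ)}ᶜ))
  rw [min_self] at hmin
  rw [max_self] at hmax
  have hb : ∀ᶠ t in nhdsWithin (0:ℝ) {0}ᶜ,
      min (F t) (G t) ≤ slope f 0 t ∧ slope f 0 t ≤ max (F t) (G t) := by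
    filter_upwards [nhdsWithin_le_nhds h1, nhdsWithin_le_nhds h2, self_mem_nhdsWithin] with t a b ht
    have ht : t ≠ 0 := ht
    rw [slope_def_field, sub_zero]
    rcases lt_or_gt_of_ne ht with h | h
    · constructor
      · apply min_le_of_left_le
        rw [le_div_iff_of_neg h]; linarith
      · apply le_max_of_le_right
        rw [div_le_iff_of_neg h]; linarith
    · constructor
      · apply min_le_of_right_le
        rw [le_div_iff₀ h]; linarith
      · apply le_max_of_le_left
        rw [div_le_iff₀ h]; linarith
  exact tendsto_of_tendsto_of_tendsto_of_le_of_le' hmin hmax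
    (hb.mono fun _ h => h.1) (hb.mono fun _ h => h.2)

/-- the two-sided directional derivative of the sum rate R along the
k-th standard basis vector exists and equals −p_k(c)/(ν(c)·ln 2). -/
theorem stmt5 (K : ℕ) (hK : 1 ≤ K) (σ2 PT : ℝ) (hσ2 : 0 < σ2) (hPT : 0 < PT)
    (c : Fin K → ℝ) (hc : ∀ k, 0 < c k) (k : Fin K) :
    HasDerivAt (fun δ : ℝ => sumRate K σ2 PT (c + δ • (Pi.single k 1 : Fin K → ℝ)))
      (-(wfPower K σ2 PT c k) / (waterLevel K σ2 PT c * Real.log 2)) 0 := by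
  have hs := wl_spec K hK σ2 PT hσ2 hPT
  set C : ℝ → Fin K → ℝ := fun δ => c + δ • (Pi.single k 1 : Fin K → ℝ) with hC
  set N : ℝ → ℝ := fun δ => waterLevel K σ2 PT (C δ) with hN
  have hC0 : C 0 = c := by simp [hC]
  have hCk : ∀ δ, C δ k = c k + δ := by intro δ; simp [hC]
  have hCj : ∀ δ j, j ≠ k → C δ j = c j := by intro δ j hj; simp [hC, hj]
  have hpos : ∀ᶠ δ in nhds (0:ℝ), ∀ j, 0 < C δ j := by
    filter_upwards [lt_mem_nhds (show -(c k) < 0 by linarith [hc k])] with δ hδ j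
    by_cases hj : j = k
    · subst hj; rw [hCk]; linarith
    · rw [hCj δ j hj]; exact hc j
  have hN0 : N 0 = waterLevel K σ2 PT c := by simp only [hN, hC0]
  have hν := (hs c hc).1
  have hNt : Filter.Tendsto N (nhds 0) (nhds (waterLevel K σ2 PT c)) := by
    have t1 : Filter.Tendsto (fun δ : ℝ => waterLevel K σ2 PT c - σ2 * |δ|) (nhds 0)
        (nhds (waterLevel K σ2 PT c)) := by
      have : Continuous (fun δ : ℝ => waterLevel K σ2 PT c - σ2 * |δ|) := by fun_prop
      simpa using this.tendsto 0
    have t2 : Filter.Tendsto (fun δ : ℝ => waterLevel K σ2 PT c + σ2 * |δ|) (nhds 0)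
        (nhds (waterLevel K σ2 PT c)) := by
      have : Continuous (fun δ : ℝ => waterLevel K σ2 PT c + σ2 * |δ|) := by fun_prop
      simpa using this.tendsto 0
    refine tendsto_of_tendsto_of_tendsto_of_le_of_le' t1 t2 ?_ ?_
    · filter_upwards [hpos] with δ hδ
      have := wl_le K σ2 PT hσ2 hPT (C δ) c (N δ) _ |δ| (hs _ hδ).2 (hs _ hc).2 (by
        intro j
        by_cases hj : j = k
        · subst hj; rw [hCk]; linarith [neg_abs_le δ]
        · rw [hCj δ j hj]; linarith [abs_nonneg δ])
      linarith
    · filter_upwards [hpos] with δ hδ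
      exact wl_le K σ2 PT hσ2 hPT c (C δ) _ (N δ) |δ| (hs _ hc).2 (hs _ hδ).2 (by
        intro j
        by_cases hj : j = k
        · subst hj; rw [hCk]; linarith [le_abs_self δ]
        · rw [hCj δ j hj]; linarith [abs_nonneg δ])
  have hCt : Filter.Tendsto (fun δ => C δ k) (nhds 0) (nhds (c k)) := by
    simp_rw [hCk]
    have : Continuous (fun δ : ℝ => c k + δ) := by fun_prop
    simpa using this.tendsto 0
  have hl2 : 0 < Real.log 2 := Real.log_pos (by norm_num)
  have hR : ∀ d, sumRate K σ2 PT d =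
      (∑ j, Real.log (1 + max (waterLevel K σ2 PT d / d j - σ2) 0 / σ2)) / Real.log 2 := by
    intro d
    simp only [sumRate, wfPower, Real.logb, Finset.sum_div]
  have hL : -(wfPower K σ2 PT c k) / (waterLevel K σ2 PT c * Real.log 2)
      = -(max (waterLevel K σ2 PT c / c k - σ2) 0) / waterLevel K σ2 PT c / Real.log 2 := by
    rw [div_div]; rfl
  rw [hL]
  have hd : HasDerivAt (fun δ => ∑ j, Real.log (1 + max (N δ / C δ j - σ2) 0 / σ2))
      (-(max (waterLevel K σ2 PT c / c k - σ2) 0) / waterLevel K σ2 PT c) 0 := by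
    refine squeeze_deriv _
      (fun δ => -(max (N δ / C δ k - σ2) 0) / waterLevel K σ2 PT c)
      (fun δ => -(max (waterLevel K σ2 PT c / c k - σ2) 0) / N δ) _ ?_ ?_ ?_ ?_
    · exact ((((hNt.div hCt (hc k).ne').sub_const σ2).max tendsto_const_nhds).neg).div_const _
    · exact tendsto_const_nhds.div hNt hν.ne'
    · filter_upwards [hpos] with δ hδ
      have := rate_le K σ2 PT hσ2 c (C δ) hc hδ _ (N δ) hν (hs _ hc).2 (hs _ hδ).2 k (hCj δ)
      rw [hN0, hC0]
      refine this.trans (le_of_eq ?_)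
      rw [hCk]; ring
    · filter_upwards [hpos] with δ hδ
      have := rate_le K σ2 PT hσ2 (C δ) c hδ hc (N δ) _ (hs _ hδ).1 (hs _ hδ).2 (hs _ hc).2 k
        (fun j hj => (hCj δ j hj).symm)
      rw [hN0, hC0]
      have e : (c k - C δ k) * max (waterLevel K σ2 PT c / c k - σ2) 0 / N δ
        = δ * (-(max (waterLevel K σ2 PT c / c k - σ2) 0) / N δ) := by rw [hCk]; ring
      rw [e] at this
      linarith
  have := hd.div_const (Real.log 2)
  refine this.congr_of_eventuallyEq (Filter.Eventually.of_forall fun δ => ?_)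
  exact hR (C δ)
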